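/- The key-rate functional K(ρ) = C(Φ(ρ)) − H(Tr(Π⁻ρ)) is convex on two-qubit density matrices: for any two-qubit density matrices ρ₁, ρ₂ and t ∈ [0,1], K(t·ρ₁ + (1−t)·ρ₂) ≤ t·K(ρ₁) + (1−t)·K(ρ₂). -/

import Mathlib

/-!
The dephased state is block diagonal with two `2 × 2` blocks (even and odd parity), so
`C(Φ(ρ))` is the sum of the coherences `Tr M log M - Tr (diag M) log (diag M)` of the blocks
(`relEntCoh_dephase`). Since `-H` is convex and the error rate `Tr(Π⁻ρ)` is affine in `ρ`
(`binEnt_concave`), it suffices that the coherence of a positive semidefinite `2 × 2` matrix is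
convex (`cohMat_convex`).

The coherence is supported at every positive definite `M₀` by the linear functional
`M ↦ Tr M (log M₀ - log (diag M₀))` (`exists_tangent`). This amounts to the inequality
`D(M ‖ M₀) ≥ D(diag M ‖ diag M₀)`. Put `Y = log M₀ + log (diag M) - log (diag M₀)`. The Gibbs
inequality gives `Tr M log M - Tr M Y ≥ Tr M - Tr exp Y`, and Golden–Thompson gives
`Tr exp Y ≤ Tr M₀ (diag M) (diag M₀)⁻¹ = Tr M`. For `2 × 2` matrices Golden–Thompson reduces to
the convexity of `u ↦ cosh √u` (`cosh_golden_thompson`), which is visible termwise in its power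
series. Singular matrices are reached by continuity.
-/

open Matrix Complex Kronecker
open scoped ComplexOrder

noncomputable section

/-- von Neumann entropy (base 2), via eigenvalues; junk value 0 if not Hermitian. -/
noncomputable def vnEntropy {n : Type*} [Fintype n] [DecidableEq n] (ρ : Matrix n n ℂ) : ℝ :=
  if h : ρ.IsHermitian then -∑ i, h.eigenvalues i * Real.logb 2 (h.eigenvalues i) else 0

/-- The diagonal part of a matrix. -/
def diagPart {n : Type*} [Fintype n] [DecidableEq n] (ρ : Matrix n n ℂ) : Matrix n n ℂ :=
  Matrix.diagonal fun i => ρ i i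

/-- Relative entropy of coherence in the computational basis. -/
noncomputable def relEntCoh {n : Type*} [Fintype n] [DecidableEq n] (ρ : Matrix n n ℂ) : ℝ :=
  vnEntropy (diagPart ρ) - vnEntropy ρ

/-- A density matrix: positive semidefinite with trace one. -/
def IsDensity {n : Type*} [Fintype n] [DecidableEq n] (ρ : Matrix n n ℂ) : Prop :=
  ρ.PosSemidef ∧ ρ.trace = 1

/-- Two-qubit index type: the first component is qubit A, the second is qubit B. -/
abbrev Q2 := Fin 2 × Fin 2

/-- Z-parity projector Π⁺ = |00⟩⟨00| + |11⟩⟨11|. -/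
def PiPlus : Matrix Q2 Q2 ℂ := Matrix.diagonal fun i => if i.1 = i.2 then 1 else 0

/-- Z-parity projector Π⁻ = |01⟩⟨01| + |10⟩⟨10|. -/
def PiMinus : Matrix Q2 Q2 ℂ := Matrix.diagonal fun i => if i.1 = i.2 then 0 else 1

/-- Partial dephasing channel Φ(ρ) = Π⁺ρΠ⁺ + Π⁻ρΠ⁻. -/
def dephase (ρ : Matrix Q2 Q2 ℂ) : Matrix Q2 Q2 ℂ :=
  PiPlus * ρ * PiPlus + PiMinus * ρ * PiMinus

/-- Binary entropy (base 2). -/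
noncomputable def binEnt (e : ℝ) : ℝ := -(e * Real.logb 2 e) - (1 - e) * Real.logb 2 (1 - e)

/-- X-basis projector Π_x⁻ = |+−⟩⟨+−| + |−+⟩⟨−+|, written entrywise. -/
def PiXMinus : Matrix Q2 Q2 ℂ :=
  Matrix.of fun i j => (1/4 : ℂ) *
    ((if i.1 = j.1 then 1 else -1) + (if i.2 = j.2 then 1 else -1))

/-- phase i^a for a : Fin 2 -/
def yph : Fin 2 → ℂ := fun a => if a = 0 then 1 else Complex.I

/-- Y-basis projector Π_y⁻ = |+i,+i⟩⟨+i,+i| + |−i,−i⟩⟨−i,−i|, written entrywise. -/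
def PiYMinus : Matrix Q2 Q2 ℂ :=
  Matrix.of fun i j => (1/4 : ℂ) *
    (yph i.1 * yph i.2 * star (yph j.1) * star (yph j.2)
      + star (yph i.1) * star (yph i.2) * yph j.1 * yph j.2)

/-- The matrix ρ(a,b): diagonal (m00,m11,m22,m33), entry a between |00⟩,|11⟩,
entry b between |01⟩,|10⟩, zeros elsewhere. -/
def rhoGen (m00 m11 m22 m33 a b : ℝ) : Matrix Q2 Q2 ℂ :=
  Matrix.of fun i j =>
    if i = j then
      (if i = (0, 0) then (m00 : ℂ) else if i = (0, 1) then (m11 : ℂ)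
        else if i = (1, 0) then (m22 : ℂ) else (m33 : ℂ))
    else if (i = ((0 : Fin 2), (0 : Fin 2)) ∧ j = (1, 1)) ∨ (i = (1, 1) ∧ j = (0, 0)) then (a : ℂ)
    else if (i = ((0 : Fin 2), (1 : Fin 2)) ∧ j = (1, 0)) ∨ (i = (1, 0) ∧ j = (0, 1)) then (b : ℂ)
    else 0

/-- The Bell-diagonal state with weights p0,p1,p2,p3 on |Φ⁺⟩,|Φ⁻⟩,|Ψ⁺⟩,|Ψ⁻⟩. -/
def bellDiag (p0 p1 p2 p3 : ℝ) : Matrix Q2 Q2 ℂ :=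
  rhoGen ((p0 + p1)/2) ((p2 + p3)/2) ((p2 + p3)/2) ((p0 + p1)/2) ((p0 - p1)/2) ((p2 - p3)/2)

/-- Partial trace over the first qubit (A). -/
def trA (M : Matrix Q2 Q2 ℂ) : Matrix (Fin 2) (Fin 2) ℂ :=
  Matrix.of fun j j' => ∑ i : Fin 2, M (i, j) (i, j')

/-- Partial trace over the second qubit (B). -/
def trB (M : Matrix Q2 Q2 ℂ) : Matrix (Fin 2) (Fin 2) ℂ :=
  Matrix.of fun i i' => ∑ j : Fin 2, M (i, j) (i', j)

/-- Coherence-based key-rate functional K(ρ) = C(Φ(ρ)) − H(Tr(Π⁻ρ)). -/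
noncomputable def keyRate (ρ : Matrix Q2 Q2 ℂ) : ℝ :=
  relEntCoh (dephase ρ) - binEnt ((PiMinus * ρ).trace.re)

/-- Outer product |ψ⟩⟨ψ|. -/
def outer (ψ : Q2 → ℂ) : Matrix Q2 Q2 ℂ := Matrix.of fun i j => ψ i * star (ψ j)

/-- Basis-optimized key rate: supremum of K over all local basis changes. -/
noncomputable def Km (ρ : Matrix Q2 Q2 ℂ) : ℝ :=
  sSup {x : ℝ | ∃ U V : Matrix (Fin 2) (Fin 2) ℂ, U ∈ Matrix.unitaryGroup (Fin 2) ℂ ∧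
    V ∈ Matrix.unitaryGroup (Fin 2) ℂ ∧ x = keyRate ((U ⊗ₖ V) * ρ * (U ⊗ₖ V)ᴴ)}


/-! ### Convexity of the coherence of a `2 × 2` matrix, in real coordinates -/

/-- Convexity of `u ↦ cosh √u`: in the power series of `cosh` each term `uᵏ/(2k)!` is convex. -/
lemma cosh_le_of_sq_eq {w p q v : ℝ} (hw0 : 0 ≤ w) (hw1 : w ≤ 1)
    (hv : v ^ 2 = w * p ^ 2 + (1 - w) * q ^ 2) :
    Real.cosh v ≤ w * Real.cosh p + (1 - w) * Real.cosh q := by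
  have hR := ((Real.hasSum_cosh p).mul_left w).add ((Real.hasSum_cosh q).mul_left (1 - w))
  refine hasSum_le (fun k => ?_) (Real.hasSum_cosh v) hR
  have hc := (convexOn_pow k).2 (show p ^ 2 ∈ Set.Ici (0 : ℝ) from sq_nonneg p)
    (show q ^ 2 ∈ Set.Ici (0 : ℝ) from sq_nonneg q) hw0 (sub_nonneg.2 hw1) (by ring)
  simp only [smul_eq_mul] at hc
  rw [pow_mul, pow_mul, pow_mul, hv, ← mul_div_assoc, ← mul_div_assoc, ← add_div]
  gcongr

/-- The Golden–Thompson inequality `Tr exp (A + B) ≤ Tr (exp A exp B)` for the traceless matrices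
`A = h • [[c, d], [d, -c]]` and `B = diag (δ, -δ)`; here `±v` are the eigenvalues of `A + B`. -/
lemma cosh_golden_thompson {h c d δ v : ℝ} (hcd : c ^ 2 + d ^ 2 = 1)
    (hv : v ^ 2 = (h * c + δ) ^ 2 + (h * d) ^ 2) :
    Real.cosh v ≤ Real.cosh h * Real.cosh δ + c * (Real.sinh h * Real.sinh δ) := by
  have hc : |c| ≤ 1 := abs_le_one_iff_mul_self_le_one.2 (by nlinarith [sq_nonneg d])
  obtain ⟨h1, h2⟩ := abs_le.1 hc
  have := cosh_le_of_sq_eq (w := (1 + c) / 2) (p := h + δ) (q := h - δ) (v := v)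
    (by linarith) (by linarith) (by rw [hv]; linear_combination h ^ 2 * hcd)
  rw [Real.cosh_add, Real.cosh_sub] at this
  linarith

/-- The Gibbs (Fenchel–Young) inequality for the conjugate pair `x log x - x` and `exp`. -/
lemma gibbs_scalar {x : ℝ} (hx : 0 < x) (u : ℝ) :
    x * u ≤ x * Real.log x - x + Real.exp u := by
  have h := Real.add_one_le_exp (u - Real.log x)
  rw [Real.exp_sub, Real.exp_log hx, le_div_iff₀ hx] at h
  linarith

/-- The larger eigenvalue of `[[a, y], [y, b]]`. -/
noncomputable def lamPlus (a b y : ℝ) : ℝ := (a + b + √((a - b) ^ 2 + 4 * y ^ 2)) / 2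

/-- The smaller eigenvalue of `[[a, y], [y, b]]`. -/
noncomputable def lamMinus (a b y : ℝ) : ℝ := (a + b - √((a - b) ^ 2 + 4 * y ^ 2)) / 2

/-- The (natural-logarithm) coherence `Tr M log M - a log a - b log b` of a `2 × 2` Hermitian
matrix `M` with diagonal `a, b` and off-diagonal entry of modulus `y`. -/
noncomputable def blockCoh (a b y : ℝ) : ℝ :=
  lamPlus a b y * Real.log (lamPlus a b y) + lamMinus a b y * Real.log (lamMinus a b y)
    - a * Real.log a - b * Real.log b

lemma lamMinus_pos {a b y : ℝ} (ha : 0 < a) (hb : 0 < b) (h : y ^ 2 < a * b) :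
    0 < lamMinus a b y := by
  have : √((a - b) ^ 2 + 4 * y ^ 2) < a + b := by
    rw [Real.sqrt_lt' (by positivity)]; nlinarith
  unfold lamMinus; linarith

lemma lamPlus_pos {a b y : ℝ} (ha : 0 < a) (hb : 0 < b) : 0 < lamPlus a b y := by
  unfold lamPlus; positivity

/-- A supporting linear functional of the coherence at a positive definite matrix `M₀`, namely
`M ↦ Tr M (log M₀ - log (diag M₀))`. That it lies below the coherence is the monotonicity
`D(M ‖ M₀) ≥ D(diag M ‖ diag M₀)`, which follows from the Gibbs variational inequality at
`Y = log M₀ + log (diag M) - log (diag M₀)` together with Golden–Thompson for `Tr exp Y`. -/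
lemma exists_tangent {a₀ b₀ y₀ : ℝ} (ha₀ : 0 < a₀) (hb₀ : 0 < b₀) (hy₀ : 0 ≤ y₀)
    (hd₀ : y₀ ^ 2 < a₀ * b₀) :
    ∃ α β ν : ℝ, 0 ≤ ν ∧ blockCoh a₀ b₀ y₀ = α * a₀ + β * b₀ + ν * y₀ ∧
      ∀ a b y : ℝ, 0 < a → 0 < b → y ^ 2 < a * b →
        α * a + β * b + ν * y ≤ blockCoh a b y := by
  -- `r₀ (c, d) = (a₀ - b₀, 2 y₀)` is the Bloch vector of `M₀` in polar form
  obtain ⟨r₀, hr₀⟩ : ∃ r, r = √((a₀ - b₀) ^ 2 + 4 * y₀ ^ 2) := ⟨_, rfl⟩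
  have hr₀nn : 0 ≤ r₀ := hr₀ ▸ Real.sqrt_nonneg _
  have hr₀sq : r₀ ^ 2 = (a₀ - b₀) ^ 2 + 4 * y₀ ^ 2 := by
    rw [hr₀, Real.sq_sqrt (by positivity)]
  obtain ⟨c, d, hcd, hd, hz, hx⟩ : ∃ c d : ℝ, c ^ 2 + d ^ 2 = 1 ∧ 0 ≤ d ∧
      a₀ - b₀ = r₀ * c ∧ 2 * y₀ = r₀ * d := by
    rcases hr₀nn.eq_or_lt with h | h
    · rw [← h] at hr₀sq ⊢
      exact ⟨1, 0, by norm_num, le_rfl, by nlinarith [sq_nonneg (a₀ - b₀), sq_nonneg y₀],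
        by nlinarith [sq_nonneg (a₀ - b₀), sq_nonneg y₀]⟩
    · refine ⟨(a₀ - b₀) / r₀, 2 * y₀ / r₀, ?_, by positivity, by field_simp, by field_simp⟩
      field_simp
      linarith
  have hlm := lamMinus_pos ha₀ hb₀ hd₀
  have hlp : 0 < lamPlus a₀ b₀ y₀ := lamPlus_pos ha₀ hb₀
  have hP : lamPlus a₀ b₀ y₀ = (a₀ + b₀ + r₀) / 2 := by rw [hr₀]; rfl
  have hM : lamMinus a₀ b₀ y₀ = (a₀ + b₀ - r₀) / 2 := by rw [hr₀]; rfl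
  -- the eigenvalues of `log M₀` are `ℓ ± h`
  obtain ⟨ℓ, hℓ⟩ : ∃ ℓ, ℓ = (Real.log (lamPlus a₀ b₀ y₀) + Real.log (lamMinus a₀ b₀ y₀)) / 2 :=
    ⟨_, rfl⟩
  obtain ⟨h, hh⟩ : ∃ h, h = (Real.log (lamPlus a₀ b₀ y₀) - Real.log (lamMinus a₀ b₀ y₀)) / 2 :=
    ⟨_, rfl⟩
  have hPe : Real.exp (ℓ + h) = (a₀ + b₀ + r₀) / 2 := by
    rw [← hP, ← Real.exp_log hlp]; congr 1; rw [hℓ, hh]; ring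
  have hMe : Real.exp (ℓ - h) = (a₀ + b₀ - r₀) / 2 := by
    rw [← hM, ← Real.exp_log hlm]; congr 1; rw [hℓ, hh]; ring
  have hhnn : 0 ≤ h := by
    have : Real.exp (ℓ - h) ≤ Real.exp (ℓ + h) := by rw [hPe, hMe]; linarith
    have := Real.exp_le_exp.1 this
    linarith
  refine ⟨ℓ + h * c - Real.log a₀, ℓ - h * c - Real.log b₀, 2 * (h * d), by positivity, ?_, ?_⟩
  · have e1 : Real.log (lamPlus a₀ b₀ y₀) = ℓ + h := by rw [hℓ, hh]; ring
    have e2 : Real.log (lamMinus a₀ b₀ y₀) = ℓ - h := by rw [hℓ, hh]; ring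
    unfold blockCoh
    rw [e1, e2, hP, hM]
    linear_combination (-h * c) * hz - h * d * hx - h * r₀ * hcd
  intro a b y ha hb hab
  -- `Y` has diagonal `u ± (h c + δ)` and off-diagonal entry `h d`; its eigenvalues are `u ± v`
  obtain ⟨κ, hκ⟩ : ∃ κ, κ = (Real.log (a / a₀) + Real.log (b / b₀)) / 2 := ⟨_, rfl⟩
  obtain ⟨δ, hδ⟩ : ∃ δ, δ = (Real.log (a / a₀) - Real.log (b / b₀)) / 2 := ⟨_, rfl⟩
  have hA : Real.exp (κ + δ) = a / a₀ := by
    rw [hκ, hδ, ← Real.exp_log (div_pos ha ha₀)]; congr 1; rw [Real.exp_log (by positivity)]; ring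
  have hB : Real.exp (κ - δ) = b / b₀ := by
    rw [hκ, hδ, ← Real.exp_log (div_pos hb hb₀)]; congr 1; rw [Real.exp_log (by positivity)]; ring
  obtain ⟨v, hv⟩ : ∃ v, v = √((h * c + δ) ^ 2 + (h * d) ^ 2) := ⟨_, rfl⟩
  have hvnn : 0 ≤ v := hv ▸ Real.sqrt_nonneg _
  have hvsq : v ^ 2 = (h * c + δ) ^ 2 + (h * d) ^ 2 := by rw [hv, Real.sq_sqrt (by positivity)]
  have hGT := cosh_golden_thompson hcd hvsq
  obtain ⟨r, hr⟩ : ∃ r, r = √((a - b) ^ 2 + 4 * y ^ 2) := ⟨_, rfl⟩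
  have hrnn : 0 ≤ r := hr ▸ Real.sqrt_nonneg _
  have hrsq : r ^ 2 = (a - b) ^ 2 + 4 * y ^ 2 := by rw [hr, Real.sq_sqrt (by positivity)]
  have hCS : (a - b) * (h * c + δ) + 2 * y * (h * d) ≤ r * v := by
    refine abs_le_of_sq_le_sq' ?_ (by positivity) |>.2
    rw [mul_pow, hrsq, hvsq]
    linarith [sq_nonneg ((a - b) * (h * d) - 2 * y * (h * c + δ))]
  have hg1 := gibbs_scalar (lamPlus_pos (y := y) ha hb) (ℓ + κ + v)
  have hg2 := gibbs_scalar (lamMinus_pos ha hb hab) (ℓ + κ - v)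
  have hP1 : lamPlus a b y = (a + b + r) / 2 := by rw [hr]; rfl
  have hM1 : lamMinus a b y = (a + b - r) / 2 := by rw [hr]; rfl
  have htr : Real.exp (ℓ + κ + v) + Real.exp (ℓ + κ - v) ≤ a + b := by
    have e1 : Real.exp (ℓ + κ + v) + Real.exp (ℓ + κ - v)
        = 2 * Real.exp (ℓ + κ) * Real.cosh v := by
      rw [Real.cosh_eq, Real.exp_add _ v, sub_eq_add_neg, Real.exp_add _ (-v)]; ring
    have e2 : 2 * Real.exp (ℓ + κ) *
        (Real.cosh h * Real.cosh δ + c * (Real.sinh h * Real.sinh δ)) = a + b := by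
      have hx1 : Real.exp (ℓ + h) = Real.exp ℓ * Real.exp h := Real.exp_add _ _
      have hx2 : Real.exp (ℓ - h) = Real.exp ℓ * Real.exp (-h) := by
        rw [sub_eq_add_neg, Real.exp_add]
      have hx3 : Real.exp (κ + δ) = Real.exp κ * Real.exp δ := Real.exp_add _ _
      have hx4 : Real.exp (κ - δ) = Real.exp κ * Real.exp (-δ) := by
        rw [sub_eq_add_neg, Real.exp_add]
      have hA' : a₀ * Real.exp (κ + δ) = a := by rw [hA]; field_simp
      have hB' : b₀ * Real.exp (κ - δ) = b := by rw [hB]; field_simp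
      rw [Real.cosh_eq, Real.cosh_eq, Real.sinh_eq, Real.sinh_eq, Real.exp_add]
      have key : 2 * (Real.exp ℓ * Real.exp κ) *
          ((Real.exp h + Real.exp (-h)) / 2 * ((Real.exp δ + Real.exp (-δ)) / 2) +
            c * ((Real.exp h - Real.exp (-h)) / 2 * ((Real.exp δ - Real.exp (-δ)) / 2)))
          = (Real.exp (ℓ + h) + Real.exp (ℓ - h)) / 2 * (Real.exp (κ + δ) + Real.exp (κ - δ))
            + c * ((Real.exp (ℓ + h) - Real.exp (ℓ - h)) / 2
              * (Real.exp (κ + δ) - Real.exp (κ - δ))) := by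
        rw [hx1, hx2, hx3, hx4]; ring
      rw [key, hPe, hMe, ← hA', ← hB']
      linear_combination (-(Real.exp (κ + δ) - Real.exp (κ - δ)) / 2) * hz
    rw [e1, ← e2]
    gcongr
  have hla : Real.log a = Real.log a₀ + κ + δ := by
    rw [hκ, hδ, Real.log_div ha.ne' ha₀.ne']; ring
  have hlb : Real.log b = Real.log b₀ + κ - δ := by
    rw [hκ, hδ, Real.log_div hb.ne' hb₀.ne']
    rw [Real.log_div ha.ne' ha₀.ne']; ring
  unfold blockCoh
  rw [hla, hlb]
  rw [hP1] at hg1 ⊢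
  rw [hM1] at hg2 ⊢
  linarith

/-- Since the slope `ν` of the supporting functional in `y` is nonnegative, it is enough that the
off-diagonal modulus `y` of the mixture is bounded by the mixture of the moduli. -/
lemma blockCoh_convex_of_pos {t a₁ b₁ y₁ a₂ b₂ y₂ y : ℝ} (ht0 : 0 ≤ t) (ht1 : t ≤ 1)
    (ha₁ : 0 < a₁) (hb₁ : 0 < b₁) (ha₂ : 0 < a₂) (hb₂ : 0 < b₂)
    (hd₁ : y₁ ^ 2 < a₁ * b₁) (hd₂ : y₂ ^ 2 < a₂ * b₂)
    (hy0 : 0 ≤ y) (hy : y ≤ t * y₁ + (1 - t) * y₂)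
    (hd : y ^ 2 < (t * a₁ + (1 - t) * a₂) * (t * b₁ + (1 - t) * b₂)) :
    blockCoh (t * a₁ + (1 - t) * a₂) (t * b₁ + (1 - t) * b₂) y ≤
      t * blockCoh a₁ b₁ y₁ + (1 - t) * blockCoh a₂ b₂ y₂ := by
  have ht1' : 0 ≤ 1 - t := by linarith
  have hmix : ∀ p q : ℝ, 0 < p → 0 < q → 0 < t * p + (1 - t) * q := by
    intro p q hp hq
    rcases ht0.eq_or_lt with h | h
    · rw [← h]; linarith
    · have := mul_pos h hp; have := mul_nonneg ht1' hq.le; linarith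
  obtain ⟨α, β, ν, hν, heq, hle⟩ := exists_tangent (hmix _ _ ha₁ ha₂) (hmix _ _ hb₁ hb₂) hy0 hd
  rw [heq]
  have h1 := mul_le_mul_of_nonneg_left (hle _ _ _ ha₁ hb₁ hd₁) ht0
  have h2 := mul_le_mul_of_nonneg_left (hle _ _ _ ha₂ hb₂ hd₂) ht1'
  have h3 := mul_le_mul_of_nonneg_left hy hν
  linarith

lemma continuous_blockCoh (y a b : ℝ) : Continuous fun ε : ℝ => blockCoh (a + ε) (b + ε) y := by
  have hη := Real.continuous_mul_log
  unfold blockCoh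
  refine ((Continuous.add ?_ ?_).sub ?_).sub ?_
  · exact hη.comp (f := fun ε => lamPlus (a + ε) (b + ε) y) (by unfold lamPlus; fun_prop)
  · exact hη.comp (f := fun ε => lamMinus (a + ε) (b + ε) y) (by unfold lamMinus; fun_prop)
  · exact hη.comp (f := fun ε => a + ε) (by fun_prop)
  · exact hη.comp (f := fun ε => b + ε) (by fun_prop)

/-- The boundary of the positive cone is reached by shifting both matrices by `ε • 1`. -/
lemma blockCoh_convex {t a₁ b₁ y₁ a₂ b₂ y₂ y : ℝ} (ht0 : 0 ≤ t) (ht1 : t ≤ 1)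
    (ha₁ : 0 ≤ a₁) (hb₁ : 0 ≤ b₁) (ha₂ : 0 ≤ a₂) (hb₂ : 0 ≤ b₂)
    (hd₁ : y₁ ^ 2 ≤ a₁ * b₁) (hd₂ : y₂ ^ 2 ≤ a₂ * b₂)
    (hy0 : 0 ≤ y) (hy : y ≤ t * y₁ + (1 - t) * y₂)
    (hd : y ^ 2 ≤ (t * a₁ + (1 - t) * a₂) * (t * b₁ + (1 - t) * b₂)) :
    blockCoh (t * a₁ + (1 - t) * a₂) (t * b₁ + (1 - t) * b₂) y ≤
      t * blockCoh a₁ b₁ y₁ + (1 - t) * blockCoh a₂ b₂ y₂ := by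
  have ht1' : 0 ≤ 1 - t := by linarith
  have hL := ((continuous_blockCoh y (t * a₁ + (1 - t) * a₂) (t * b₁ + (1 - t) * b₂)).tendsto
    0).mono_left (nhdsWithin_le_nhds (s := Set.Ioi 0))
  have hR := ((((continuous_blockCoh y₁ a₁ b₁).const_mul t).add
    ((continuous_blockCoh y₂ a₂ b₂).const_mul (1 - t))).tendsto 0).mono_left
      (nhdsWithin_le_nhds (s := Set.Ioi 0))
  simp only [add_zero, Pi.add_apply] at hL hR
  refine le_of_tendsto_of_tendsto hL hR ?_
  filter_upwards [self_mem_nhdsWithin] with ε (hε : 0 < ε)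
  have hs : ∀ a b z : ℝ, 0 ≤ a → 0 ≤ b → z ≤ a * b → z < (a + ε) * (b + ε) := by
    intro a b z ha hb hz
    nlinarith [mul_nonneg ha hε.le, mul_nonneg hb hε.le, mul_pos hε hε]
  have e1 : t * a₁ + (1 - t) * a₂ + ε = t * (a₁ + ε) + (1 - t) * (a₂ + ε) := by ring
  have e2 : t * b₁ + (1 - t) * b₂ + ε = t * (b₁ + ε) + (1 - t) * (b₂ + ε) := by ring
  rw [e1, e2]
  refine blockCoh_convex_of_pos ht0 ht1 (by linarith) (by linarith) (by linarith) (by linarith)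
    (hs _ _ _ ha₁ hb₁ hd₁) (hs _ _ _ ha₂ hb₂ hd₂) hy0 hy ?_
  rw [← e1, ← e2]
  exact hs _ _ _ (by positivity) (by positivity) hd

/-! ### Spectrum of the dephased state -/

/-- The entropy is determined by the characteristic polynomial, so it can be computed from any
list of its roots. -/
lemma vnEntropy_of_charpoly {n : Type*} [Fintype n] [DecidableEq n] {A : Matrix n n ℂ}
    (hA : A.IsHermitian) (s : Multiset ℝ)
    (h : A.charpoly = (s.map fun x : ℝ => Polynomial.X - Polynomial.C (x : ℂ)).prod) :
    vnEntropy A = -(s.map fun x => x * Real.logb 2 x).sum := by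
  have h1 := hA.roots_charpoly_eq_eigenvalues
  have h2 : A.charpoly.roots = s.map (fun x : ℝ => (x : ℂ)) := by
    rw [h, ← Polynomial.roots_multiset_prod_X_sub_C (s.map (fun x : ℝ => (x : ℂ))),
      Multiset.map_map]
    rfl
  rw [h2, ← Multiset.map_map] at h1
  have h3 : s = Multiset.map hA.eigenvalues Finset.univ.val :=
    Multiset.map_injective Complex.ofReal_injective h1
  rw [vnEntropy, dif_pos hA, h3, Multiset.map_map]
  rfl

/-- The two parity sectors: `inl` enumerates `00, 11` and `inr` enumerates `01, 10`. -/
def parityEquiv : Fin 2 ⊕ Fin 2 ≃ Q2 where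
  toFun := Sum.elim (fun i => (i, i)) (fun i => (i, i + 1))
  invFun p := if p.1 = p.2 then Sum.inl p.1 else Sum.inr p.1
  left_inv := by decide
  right_inv := by decide

lemma dephase_apply (ρ : Matrix Q2 Q2 ℂ) (i j : Q2) :
    dephase ρ i j = if (i.1 = i.2 ↔ j.1 = j.2) then ρ i j else 0 := by
  simp only [dephase, PiPlus, PiMinus, Matrix.add_apply, Matrix.mul_diagonal,
    Matrix.diagonal_mul]
  by_cases h : i.1 = i.2 <;> by_cases h' : j.1 = j.2 <;> simp [h, h']

lemma charpoly_block {M : Matrix (Fin 2) (Fin 2) ℂ} (hM : M.IsHermitian) :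
    M.charpoly = (Polynomial.X - Polynomial.C (lamPlus (M 0 0).re (M 1 1).re ‖M 0 1‖ : ℂ)) *
      (Polynomial.X - Polynomial.C (lamMinus (M 0 0).re (M 1 1).re ‖M 0 1‖ : ℂ)) := by
  have h0 : ((M 0 0).re : ℂ) = M 0 0 := hM.coe_re_apply_self 0
  have h1 : ((M 1 1).re : ℂ) = M 1 1 := hM.coe_re_apply_self 1
  have h01 : M 0 1 * M 1 0 = ((‖M 0 1‖ ^ 2 : ℝ) : ℂ) := by
    rw [← hM.apply 1 0, ← starRingEnd_apply, Complex.mul_conj, Complex.normSq_eq_norm_sq]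
  have hs : (M 0 0 + M 1 1 : ℂ) = ((lamPlus (M 0 0).re (M 1 1).re ‖M 0 1‖ +
      lamMinus (M 0 0).re (M 1 1).re ‖M 0 1‖ : ℝ) : ℂ) := by
    rw [← h0, ← h1, ← Complex.ofReal_add]
    congr 1
    simp only [lamPlus, lamMinus, Complex.ofReal_re]
    ring
  have hp : (M 0 0 * M 1 1 - M 0 1 * M 1 0 : ℂ) = ((lamPlus (M 0 0).re (M 1 1).re ‖M 0 1‖ *
      lamMinus (M 0 0).re (M 1 1).re ‖M 0 1‖ : ℝ) : ℂ) := by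
    rw [h01]
    nth_rw 1 [← h0, ← h1]
    rw [← Complex.ofReal_mul, ← Complex.ofReal_sub]
    congr 1
    have := Real.sq_sqrt (show 0 ≤ ((M 0 0).re - (M 1 1).re) ^ 2 + 4 * ‖M 0 1‖ ^ 2 by positivity)
    simp only [lamPlus, lamMinus]
    linear_combination (1 / 4) * this
  rw [Matrix.charpoly_fin_two, Matrix.trace_fin_two, Matrix.det_fin_two, hs, hp]
  simp only [Complex.ofReal_add, Complex.ofReal_mul, map_add, map_mul]
  ring

/-- The even-parity block of `ρ`, on `|00⟩, |11⟩`. -/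
def plusBlock (ρ : Matrix Q2 Q2 ℂ) : Matrix (Fin 2) (Fin 2) ℂ :=
  ρ.submatrix (fun i => (i, i)) (fun i => (i, i))

/-- The odd-parity block of `ρ`, on `|01⟩, |10⟩`. -/
def minusBlock (ρ : Matrix Q2 Q2 ℂ) : Matrix (Fin 2) (Fin 2) ℂ :=
  ρ.submatrix (fun i => (i, i + 1)) (fun i => (i, i + 1))

lemma charpoly_dephase (ρ : Matrix Q2 Q2 ℂ) :
    (dephase ρ).charpoly = (plusBlock ρ).charpoly * (minusBlock ρ).charpoly := by
  have h : Matrix.reindex parityEquiv.symm parityEquiv.symm (dephase ρ) =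
      Matrix.fromBlocks (plusBlock ρ) 0 0 (minusBlock ρ) := by
    ext i j
    rcases i with i | i <;> rcases j with j | j <;>
      simp [dephase_apply, parityEquiv, plusBlock, minusBlock]
  rw [← Matrix.charpoly_reindex parityEquiv.symm, h, Matrix.charpoly_fromBlocks_zero₁₂]

/-- Coherence of a `2 × 2` Hermitian matrix, in nats. -/
def cohMat (M : Matrix (Fin 2) (Fin 2) ℂ) : ℝ := blockCoh (M 0 0).re (M 1 1).re ‖M 0 1‖

lemma dephase_isHermitian {ρ : Matrix Q2 Q2 ℂ} (hρ : ρ.IsHermitian) :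
    (dephase ρ).IsHermitian := by
  ext i j
  rw [Matrix.conjTranspose_apply, dephase_apply, dephase_apply]
  by_cases h : (i.1 = i.2 ↔ j.1 = j.2)
  · rw [if_pos h, if_pos h.symm, hρ.apply]
  · rw [if_neg h, if_neg (fun h' => h h'.symm), star_zero]

lemma relEntCoh_dephase {ρ : Matrix Q2 Q2 ℂ} (hρ : ρ.IsHermitian) :
    relEntCoh (dephase ρ) = (cohMat (plusBlock ρ) + cohMat (minusBlock ρ)) / Real.log 2 := by
  have hd : diagPart (dephase ρ) = Matrix.diagonal fun i => (((ρ i i).re : ℝ) : ℂ) := by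
    unfold diagPart
    congr 1
    ext i
    rw [dephase_apply, if_pos Iff.rfl]
    exact (hρ.coe_re_apply_self i).symm
  have hdH : (diagPart (dephase ρ)).IsHermitian := by
    rw [hd]
    exact Matrix.isHermitian_diagonal_of_self_adjoint _ (by ext i; simp)
  have e1 := vnEntropy_of_charpoly hdH (Finset.univ.val.map fun i : Q2 => (ρ i i).re)
    (by rw [hd, Matrix.charpoly_diagonal, Multiset.map_map]; rfl)
  have e2 := vnEntropy_of_charpoly (dephase_isHermitian hρ)
    {lamPlus (plusBlock ρ 0 0).re (plusBlock ρ 1 1).re ‖plusBlock ρ 0 1‖,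
      lamMinus (plusBlock ρ 0 0).re (plusBlock ρ 1 1).re ‖plusBlock ρ 0 1‖,
      lamPlus (minusBlock ρ 0 0).re (minusBlock ρ 1 1).re ‖minusBlock ρ 0 1‖,
      lamMinus (minusBlock ρ 0 0).re (minusBlock ρ 1 1).re ‖minusBlock ρ 0 1‖}
    (by
      rw [charpoly_dephase, charpoly_block (M := plusBlock ρ) (hρ.submatrix _),
        charpoly_block (M := minusBlock ρ) (hρ.submatrix _)]
      simp [mul_assoc])
  have e3 : ((Finset.univ.val.map fun i : Q2 => (ρ i i).re).map
      fun x => x * Real.logb 2 x).sum = ∑ i : Q2, (ρ i i).re * Real.logb 2 (ρ i i).re := by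
    rw [Multiset.map_map]; rfl
  rw [relEntCoh, e1, e2, e3, Fintype.sum_prod_type]
  simp only [Fin.sum_univ_two, Multiset.insert_eq_cons, Multiset.map_cons, Multiset.sum_cons,
    Multiset.map_singleton, Multiset.sum_singleton, cohMat, blockCoh, Real.logb]
  simp only [plusBlock, minusBlock, Matrix.submatrix_apply, zero_add, Fin.isValue,
    show (1 + 1 : Fin 2) = 0 from rfl]
  ring

lemma trace_PiMinus_mul (ρ : Matrix Q2 Q2 ℂ) :
    (PiMinus * ρ).trace = ρ (0, 1) (0, 1) + ρ (1, 0) (1, 0) := by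
  simp [PiMinus, Matrix.trace, Matrix.diagonal_mul, Fintype.sum_prod_type]

lemma sq_norm_le_of_posSemidef {M : Matrix (Fin 2) (Fin 2) ℂ} (hM : M.PosSemidef) :
    ‖M 0 1‖ ^ 2 ≤ (M 0 0).re * (M 1 1).re := by
  have h := hM.det_nonneg
  have h0 : ((M 0 0).re : ℂ) = M 0 0 := hM.1.coe_re_apply_self 0
  have h1 : ((M 1 1).re : ℂ) = M 1 1 := hM.1.coe_re_apply_self 1
  have h01 : M 0 1 * M 1 0 = ((‖M 0 1‖ ^ 2 : ℝ) : ℂ) := by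
    rw [← hM.1.apply 1 0, ← starRingEnd_apply, Complex.mul_conj, Complex.normSq_eq_norm_sq]
  rw [Matrix.det_fin_two, h01, ← h0, ← h1, ← Complex.ofReal_mul, ← Complex.ofReal_sub,
    Complex.zero_le_real] at h
  linarith

lemma re_diag_nonneg {M : Matrix (Fin 2) (Fin 2) ℂ} (hM : M.PosSemidef) (i : Fin 2) :
    0 ≤ (M i i).re :=
  (Complex.le_def.1 hM.diag_nonneg).1

lemma posSemidef_mix {n : Type*} [Fintype n] {M N : Matrix n n ℂ} (hM : M.PosSemidef)
    (hN : N.PosSemidef) {t : ℝ} (ht0 : 0 ≤ t) (ht1 : t ≤ 1) :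
    ((t : ℂ) • M + ((1 - t : ℝ) : ℂ) • N).PosSemidef :=
  (hM.smul (Complex.zero_le_real.2 ht0)).add
    (hN.smul (Complex.zero_le_real.2 (sub_nonneg.2 ht1)))

lemma cohMat_convex {M N : Matrix (Fin 2) (Fin 2) ℂ} (hM : M.PosSemidef) (hN : N.PosSemidef)
    {t : ℝ} (ht0 : 0 ≤ t) (ht1 : t ≤ 1) :
    cohMat ((t : ℂ) • M + ((1 - t : ℝ) : ℂ) • N) ≤ t * cohMat M + (1 - t) * cohMat N := by
  have hd := sq_norm_le_of_posSemidef (posSemidef_mix hM hN ht0 ht1)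
  have hre : ∀ i, (((t : ℂ) • M + ((1 - t : ℝ) : ℂ) • N) i i).re
      = t * (M i i).re + (1 - t) * (N i i).re := by
    intro i
    rw [Matrix.add_apply, Matrix.smul_apply, Matrix.smul_apply, smul_eq_mul, smul_eq_mul,
      Complex.add_re, Complex.re_ofReal_mul, Complex.re_ofReal_mul]
  have hy : ‖((t : ℂ) • M + ((1 - t : ℝ) : ℂ) • N) 0 1‖ ≤ t * ‖M 0 1‖ + (1 - t) * ‖N 0 1‖ := by
    rw [Matrix.add_apply, Matrix.smul_apply, Matrix.smul_apply]
    refine (norm_add_le _ _).trans (le_of_eq ?_)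
    rw [norm_smul, norm_smul, Complex.norm_of_nonneg ht0,
      Complex.norm_of_nonneg (sub_nonneg.2 ht1)]
  rw [hre, hre] at hd
  unfold cohMat
  rw [hre, hre]
  exact blockCoh_convex ht0 ht1 (re_diag_nonneg hM 0) (re_diag_nonneg hM 1)
    (re_diag_nonneg hN 0) (re_diag_nonneg hN 1) (sq_norm_le_of_posSemidef hM)
    (sq_norm_le_of_posSemidef hN) (norm_nonneg _) hy hd

/-! ### Convexity of the key rate -/

lemma binEnt_concave {e f t : ℝ} (he0 : 0 ≤ e) (he1 : e ≤ 1) (hf0 : 0 ≤ f) (hf1 : f ≤ 1)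
    (ht0 : 0 ≤ t) (ht1 : t ≤ 1) :
    t * binEnt e + (1 - t) * binEnt f ≤ binEnt (t * e + (1 - t) * f) := by
  have hη : ∀ x : ℝ, binEnt x = Real.binEntropy x / Real.log 2 := by
    intro x
    rw [Real.binEntropy, Real.log_inv, Real.log_inv, binEnt, Real.logb, Real.logb]
    ring
  have h := Real.strictConcave_binEntropy.concaveOn.2 (show e ∈ Set.Icc (0 : ℝ) 1 from ⟨he0, he1⟩)
    (show f ∈ Set.Icc (0 : ℝ) 1 from ⟨hf0, hf1⟩) ht0 (sub_nonneg.2 ht1) (by ring)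
  simp only [smul_eq_mul] at h
  rw [hη, hη, hη, ← mul_div_assoc, ← mul_div_assoc, ← add_div]
  have := Real.log_pos one_lt_two
  gcongr

lemma errorRate_mem {ρ : Matrix Q2 Q2 ℂ} (h : IsDensity ρ) :
    0 ≤ (PiMinus * ρ).trace.re ∧ (PiMinus * ρ).trace.re ≤ 1 := by
  have hn : ∀ i, 0 ≤ (ρ i i).re := fun i => (Complex.le_def.1 h.1.diag_nonneg).1
  have ht := congrArg Complex.re h.2
  simp only [Matrix.trace, Matrix.diag_apply, Fintype.sum_prod_type, Fin.sum_univ_two,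
    Complex.add_re, Complex.one_re] at ht
  rw [trace_PiMinus_mul, Complex.add_re]
  have := hn (0, 0)
  have := hn (0, 1)
  have := hn (1, 0)
  have := hn (1, 1)
  constructor <;> linarith

/-- convexity of the key-rate functional K(ρ) = C(Φ(ρ)) − H(Tr(Π⁻ρ)). -/
theorem stmt_14 (ρ₁ ρ₂ : Matrix Q2 Q2 ℂ) (h₁ : IsDensity ρ₁) (h₂ : IsDensity ρ₂)
    (t : ℝ) (ht0 : 0 ≤ t) (ht1 : t ≤ 1) :
    keyRate ((t : ℂ) • ρ₁ + ((1 - t : ℝ) : ℂ) • ρ₂) ≤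
      t * keyRate ρ₁ + (1 - t) * keyRate ρ₂ := by
  have hmix := posSemidef_mix h₁.1 h₂.1 ht0 ht1
  have hp := cohMat_convex (h₁.1.submatrix fun i : Fin 2 => (i, i))
    (h₂.1.submatrix fun i : Fin 2 => (i, i)) ht0 ht1
  have hm := cohMat_convex (h₁.1.submatrix fun i : Fin 2 => (i, i + 1))
    (h₂.1.submatrix fun i : Fin 2 => (i, i + 1)) ht0 ht1
  obtain ⟨he0, he1⟩ := errorRate_mem h₁
  obtain ⟨hf0, hf1⟩ := errorRate_mem h₂
  have hb := binEnt_concave he0 he1 hf0 hf1 ht0 ht1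
  have htr : (PiMinus * ((t : ℂ) • ρ₁ + ((1 - t : ℝ) : ℂ) • ρ₂)).trace.re
      = t * (PiMinus * ρ₁).trace.re + (1 - t) * (PiMinus * ρ₂).trace.re := by
    rw [Matrix.mul_add, Matrix.mul_smul, Matrix.mul_smul, Matrix.trace_add, Matrix.trace_smul,
      Matrix.trace_smul, smul_eq_mul, smul_eq_mul, Complex.add_re, Complex.re_ofReal_mul,
      Complex.re_ofReal_mul]
  have hcoh : relEntCoh (dephase ((t : ℂ) • ρ₁ + ((1 - t : ℝ) : ℂ) • ρ₂)) ≤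
      t * relEntCoh (dephase ρ₁) + (1 - t) * relEntCoh (dephase ρ₂) := by
    rw [relEntCoh_dephase hmix.1, relEntCoh_dephase h₁.1.1, relEntCoh_dephase h₂.1.1,
      ← mul_div_assoc, ← mul_div_assoc, ← add_div]
    have hlog := Real.log_pos one_lt_two
    refine div_le_div_of_nonneg_right ?_ hlog.le
    refine (add_le_add hp hm).trans (le_of_eq ?_)
    simp only [plusBlock, minusBlock]
    ring
  unfold keyRate
  rw [htr]
  linarith

end
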